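/- Fix x, X, e ∈ E and define v : ℝ → E by v(s) := D²(f s)(x)[X, e]. Then v(0) = 0 and, for all s ≥ 0, v is differentiable with v'(s) = DF(f s x)(v(s)) + D²F(f s x)[ D(f s)(x) X , D(f s)(x) e ]. -/

import Mathlib

/-!
By the group law `f (h + s) = f h ∘ f s`, the variational equation
`∂ₛ D(f s)(x) = DF(f s x) ∘ D(f s)(x)` at time `s` reduces to `∂ₕ D(f h)(y) = DF(y)` at `h = 0`.
This is a local statement: a fencing argument shows that two trajectories starting near `y` with
initial difference `w` differ at time `h` by `w + h DF(y) w + o(h) ‖w‖`, uniformly in `w`.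

The second order equation is the first order one for the flow `(x, e) ↦ (f s x, D(f s)(x) e)`
induced on the tangent bundle `E × E`. That flow is generated by `(x, e) ↦ (F x, DF(x) e)`, again by
the variational equation, and its derivative in the direction `(X, 0)` contains `D²(f s)(x)[X, e]`.
-/

open Filter Metric Set Topology
open scoped NNReal

theorem norm_sub_sub_map_le_of_approximatesLinearOn {𝕜 E G : Type*}
    [NontriviallyNormedField 𝕜] [NormedAddCommGroup E] [NormedSpace 𝕜 E] [NormedAddCommGroup G]
    [NormedSpace 𝕜 G] {F : E → G} {A : E →L[𝕜] G} {s : Set E} {c : ℝ≥0} {a b w : E} {η : ℝ}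
    (hF : ApproximatesLinearOn F A s c) (ha : a ∈ s) (hb : b ∈ s)
    (hη : ‖a - b - w‖ ≤ η * ‖w‖) :
    ‖F a - F b - A w‖ ≤ (c * (1 + η) + ‖A‖ * η) * ‖w‖ := by
  have hab : ‖a - b‖ ≤ (1 + η) * ‖w‖ := by
    linarith [norm_le_norm_add_norm_sub' (a - b) w]
  calc ‖F a - F b - A w‖ = ‖(F a - F b - A (a - b)) + A (a - b - w)‖ := by
        rw [map_sub A (a - b)]; congr 1; abel
    _ ≤ c * ‖a - b‖ + ‖A‖ * ‖a - b - w‖ :=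
        norm_add_le_of_le (hF a ha b hb) (A.le_opNorm _)
    _ ≤ c * ((1 + η) * ‖w‖) + ‖A‖ * (η * ‖w‖) := by gcongr
    _ = (c * (1 + η) + ‖A‖ * η) * ‖w‖ := by ring

-- The estimate is its own a priori bound: as long as it holds, `α` stays in the ball on which `F`
-- is almost linear, and there the remainder grows strictly slower than `ε * ‖α 0 - β 0‖`.
theorem norm_trajectory_sub_sub_smul_le {E : Type*} [NormedAddCommGroup E] [NormedSpace ℝ E]
    {F : E → E} {A : E →L[ℝ] E} {y : E} {r ε δ : ℝ} {c : ℝ≥0} {α β : ℝ → E}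
    (hF : ApproximatesLinearOn F A (ball y r) c)
    (hα : ∀ t ∈ Icc 0 δ, HasDerivAt α (F (α t)) t) (hβ : ∀ t ∈ Icc 0 δ, HasDerivAt β (F (β t)) t)
    (hβy : ∀ t ∈ Icc 0 δ, β t ∈ ball y (r / 2))
    (hne : α 0 ≠ β 0) (hr : 2 * ‖α 0 - β 0‖ ≤ r / 2)
    (hδ : ∀ t ∈ Icc 0 δ, (ε + ‖A‖) * t ≤ 1)
    (hcε : ∀ t ∈ Icc 0 δ, 2 * c + ‖A‖ * ((ε + ‖A‖) * t) < ε) :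
    ∀ t ∈ Icc 0 δ, ‖α t - β t - (α 0 - β 0) - t • A (α 0 - β 0)‖ ≤ ε * t * ‖α 0 - β 0‖ := by
  set w := α 0 - β 0 with hw
  have hw_pos : 0 < ‖w‖ := norm_pos_iff.2 (sub_ne_zero.2 hne)
  have hderiv : ∀ t ∈ Icc 0 δ,
      HasDerivAt (fun t ↦ α t - β t - w - t • A w) (F (α t) - F (β t) - A w) t := fun t ht ↦ by
    simpa using (((hα t ht).sub (hβ t ht)).sub_const w).fun_sub ((hasDerivAt_id t).smul_const (A w))
  refine image_norm_le_of_norm_deriv_right_lt_deriv_boundary' (B' := fun _ ↦ ε * ‖w‖)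
    (fun t ht ↦ (hderiv t ht).continuousAt.continuousWithinAt)
    (fun t ht ↦ (hderiv t (Ico_subset_Icc_self ht)).hasDerivWithinAt)
    (by simp [hw]) (by fun_prop)
    (fun t _ ↦ by
      simpa using (((hasDerivAt_id t).const_mul ε).mul_const ‖w‖).hasDerivWithinAt)
    fun t ht' hfence ↦ ?_
  have ht : t ∈ Icc 0 δ := Ico_subset_Icc_self ht'
  have hdiff : ‖α t - β t - w‖ ≤ (ε + ‖A‖) * t * ‖w‖ :=
    calc ‖α t - β t - w‖ = ‖(α t - β t - w - t • A w) + t • A w‖ := by rw [sub_add_cancel]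
      _ ≤ ε * t * ‖w‖ + t * (‖A‖ * ‖w‖) := by
        refine norm_add_le_of_le hfence.le ?_
        rw [norm_smul, Real.norm_of_nonneg ht.1]
        exact mul_le_mul_of_nonneg_left (A.le_opNorm w) ht.1
      _ = (ε + ‖A‖) * t * ‖w‖ := by ring
  have hαβ : ‖α t - β t‖ ≤ 2 * ‖w‖ := by
    linarith [norm_le_norm_add_norm_sub' (α t - β t) w,
      mul_le_mul_of_nonneg_right (hδ t ht) hw_pos.le]
  have hβt : ‖β t - y‖ < r / 2 := mem_ball_iff_norm.1 (hβy t ht)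
  have hαy : α t ∈ ball y r := mem_ball_iff_norm.2 <| by
    linarith [norm_sub_le_norm_sub_add_norm_sub (α t) (β t) y]
  have hβy' : β t ∈ ball y r := mem_ball_iff_norm.2 <| by linarith [norm_nonneg (β t - y)]
  refine (norm_sub_sub_map_le_of_approximatesLinearOn hF hαy hβy' hdiff).trans_lt ?_
  refine mul_lt_mul_of_pos_right (lt_of_le_of_lt ?_ (hcε t ht)) hw_pos
  linarith [mul_le_mul_of_nonneg_left (hδ t ht) c.coe_nonneg]

/-- `f` is a one-parameter group of maps of `E` whose orbits are integral curves of the vector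
field `F`. Neither joint continuity of `f` nor regularity of the maps `f t` is part of the
definition. -/
structure IsGlobalFlow {E : Type*} [NormedAddCommGroup E] [NormedSpace ℝ E]
    (F : E → E) (f : ℝ → E → E) : Prop where
  map_zero : ∀ x, f 0 x = x
  map_add : ∀ s t x, f (s + t) x = f s (f t x)
  hasDerivAt : ∀ t x, HasDerivAt (fun τ ↦ f τ x) (F (f t x)) t

namespace IsGlobalFlow

variable {E : Type*} [NormedAddCommGroup E] [NormedSpace ℝ E]
  {F : E → E} {A : E →L[ℝ] E} {f : ℝ → E → E} {y : E}

theorem map_zero_eq_id (hf : IsGlobalFlow F f) : f 0 = id :=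
  funext hf.map_zero

theorem map_add_eq_comp (hf : IsGlobalFlow F f) (s t : ℝ) : f (s + t) = f s ∘ f t :=
  funext (hf.map_add s t)

theorem timeReversal (hf : IsGlobalFlow F f) : IsGlobalFlow (-F) (fun t ↦ f (-t)) where
  map_zero x := by simpa using hf.map_zero x
  map_add s t x := by rw [neg_add, hf.map_add]
  hasDerivAt t x := by
    simpa [Function.comp_def] using (hf.hasDerivAt (-t) x).scomp t (hasDerivAt_neg t)

theorem eventually_norm_fderiv_sub_id_sub_smul_le (hf : IsGlobalFlow F f)
    (hF : HasStrictFDerivAt F A y) (hfd : ∀ t, DifferentiableAt ℝ (f t) y) {ε : ℝ} (hε : 0 < ε) :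
    ∀ᶠ t in 𝓝[≥] (0 : ℝ), ‖fderiv ℝ (f t) y - .id ℝ E - t • A‖ ≤ ε * t := by
  have hc : (0 : ℝ≥0) < ⟨ε / 4, by positivity⟩ := NNReal.coe_pos.1 (div_pos hε four_pos)
  obtain ⟨s, hs, hFs⟩ := hF.approximates_deriv_on_nhds (Or.inr hc)
  obtain ⟨r, hr, hrs⟩ := Metric.mem_nhds_iff.1 hs
  have hball : ∀ᶠ t in 𝓝 (0 : ℝ), f t y ∈ ball y (r / 2) := by
    refine (hf.hasDerivAt 0 y).continuousAt.eventually_mem ?_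
    simpa only [hf.map_zero] using ball_mem_nhds y (half_pos hr)
  have hδ : ∀ᶠ t in 𝓝 (0 : ℝ), (ε + ‖A‖) * t ≤ 1 :=
    (Continuous.tendsto' (by fun_prop) _ 0 (by simp)).eventually_le_const one_pos
  have hcε : ∀ᶠ t in 𝓝 (0 : ℝ), 2 * (ε / 4) + ‖A‖ * ((ε + ‖A‖) * t) < ε :=
    (Continuous.tendsto' (by fun_prop) _ (2 * (ε / 4)) (by simp)).eventually_lt_const (by linarith)
  obtain ⟨δ, hδ_pos, hδ_sub⟩ := mem_nhdsGE_iff_exists_Icc_subset.1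
    (nhdsWithin_le_nhds (hball.and (hδ.and hcε)))
  filter_upwards [Icc_mem_nhdsGE hδ_pos] with t ht
  have hfderiv : fderiv ℝ (fun z ↦ f t z - z - t • A z) y = fderiv ℝ (f t) y - .id ℝ E - t • A :=
    (((hfd t).hasFDerivAt.sub (hasFDerivAt_id y)).sub (A.hasFDerivAt.const_smul t)).fderiv
  rw [← hfderiv]
  refine norm_fderiv_le_of_lip' ℝ (mul_nonneg hε.le ht.1) ?_
  filter_upwards [ball_mem_nhds y (show 0 < r / 4 by positivity)] with z hz
  rcases eq_or_ne z y with rfl | hzy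
  · simp
  have hmain := norm_trajectory_sub_sub_smul_le (hFs.mono_set hrs) (α := fun t ↦ f t z)
    (β := fun t ↦ f t y) (fun t _ ↦ hf.hasDerivAt t z) (fun t _ ↦ hf.hasDerivAt t y)
    (fun t ht ↦ (hδ_sub ht).1) (by simpa only [hf.map_zero])
    (by simp only [hf.map_zero]; linarith [mem_ball_iff_norm.1 hz])
    (fun t ht ↦ (hδ_sub ht).2.1) (fun t ht ↦ (hδ_sub ht).2.2) t ht
  simp only [hf.map_zero] at hmain
  convert hmain using 2
  rw [map_sub, smul_sub]
  abel

theorem hasDerivWithinAt_fderiv_zero (hf : IsGlobalFlow F f) (hF : HasStrictFDerivAt F A y)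
    (hfd : ∀ t, DifferentiableAt ℝ (f t) y) :
    HasDerivWithinAt (fun t ↦ fderiv ℝ (f t) y) A (Ici 0) 0 := by
  refine .of_isLittleO (Asymptotics.isLittleO_iff.2 fun ε hε ↦ ?_)
  filter_upwards [hf.eventually_norm_fderiv_sub_id_sub_smul_le hF hfd hε, self_mem_nhdsWithin]
    with t hle ht
  simpa [hf.map_zero_eq_id, abs_of_nonneg (mem_Ici.1 ht)] using hle

theorem hasDerivAt_fderiv_zero (hf : IsGlobalFlow F f) (hF : HasStrictFDerivAt F A y)
    (hfd : ∀ t, DifferentiableAt ℝ (f t) y) :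
    HasDerivAt (fun t ↦ fderiv ℝ (f t) y) A 0 := by
  have hright := hf.hasDerivWithinAt_fderiv_zero hF hfd
  have hleft : HasDerivWithinAt (fun t ↦ fderiv ℝ (f t) y) A (Iic 0) 0 := by
    have hrev := hf.timeReversal.hasDerivWithinAt_fderiv_zero hF.neg fun t ↦ hfd (-t)
    rw [← neg_zero] at hrev
    simpa [Function.comp_def] using
      hrev.scomp 0 (hasDerivAt_neg 0).hasDerivWithinAt fun t ht ↦ by simpa using ht
  simpa only [Iic_union_Ici, hasDerivWithinAt_univ] using hleft.union hright

theorem hasDerivAt_fderiv (hf : IsGlobalFlow F f) (hF : ContDiff ℝ 1 F)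
    (hfd : ∀ t, Differentiable ℝ (f t)) (x : E) (s : ℝ) :
    HasDerivAt (fun τ ↦ fderiv ℝ (f τ) x) (fderiv ℝ F (f s x) ∘L fderiv ℝ (f s) x) s := by
  have hsplit : (fun τ ↦ fderiv ℝ (f τ) x) =
      fun τ ↦ fderiv ℝ (f (τ - s)) (f s x) ∘L fderiv ℝ (f s) x := funext fun τ ↦ by
    rw [← fderiv_comp x (hfd _ _) (hfd _ _), ← hf.map_add_eq_comp, sub_add_cancel]
  have hzero := hf.hasDerivAt_fderiv_zero (hF.contDiffAt.hasStrictFDerivAt one_ne_zero)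
    fun t ↦ hfd t (f s x)
  rw [← sub_self s] at hzero
  rw [hsplit]
  simpa using (hzero.comp_sub_const s s).clm_comp (hasDerivAt_const s (fderiv ℝ (f s) x))

end IsGlobalFlow

section TangentLift

variable {E F G : Type*} [NormedAddCommGroup E] [NormedSpace ℝ E]
  [NormedAddCommGroup F] [NormedSpace ℝ F] [NormedAddCommGroup G] [NormedSpace ℝ G]

/-- The tangent map `(x, e) ↦ (g x, Dg(x) e)` of `g`, with the tangent bundles of `E` and `F`
identified with `E × E` and `F × F`. Applied to a vector field on `E`, it gives the complete lift
of that field to the tangent bundle, up to the canonical flip of the double tangent bundle. -/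
noncomputable def tangentLift (g : E → F) (p : E × E) : F × F :=
  (g p.1, fderiv ℝ g p.1 p.2)

theorem tangentLift_id : tangentLift (id : E → E) = id := by
  funext p
  simp [tangentLift]

theorem tangentLift_comp {g : F → G} {h : E → F} (hg : Differentiable ℝ g)
    (hh : Differentiable ℝ h) : tangentLift (g ∘ h) = tangentLift g ∘ tangentLift h := by
  funext p
  simp [tangentLift, fderiv_comp p.1 (hg _) (hh _)]

theorem contDiff_tangentLift {g : E → F} {m n : WithTop ℕ∞} (hg : ContDiff ℝ n g)
    (hmn : m + 1 ≤ n) : ContDiff ℝ m (tangentLift g) :=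
  ((hg.of_le (le_self_add.trans hmn)).comp contDiff_fst).prodMk
    (((hg.fderiv_right hmn).comp contDiff_fst).clm_apply contDiff_snd)

theorem fderiv_tangentLift_apply {g : E → F} (hg : ContDiff ℝ 2 g) (p q : E × E) :
    fderiv ℝ (tangentLift g) p q =
      (fderiv ℝ g p.1 q.1, fderiv ℝ g p.1 q.2 + fderiv ℝ (fderiv ℝ g) p.1 q.1 p.2) := by
  have hbase : HasFDerivAt (fun p : E × E ↦ g p.1) (fderiv ℝ g p.1 ∘L .fst ℝ E E) p :=
    (hg.differentiable two_ne_zero p.1).hasFDerivAt.comp p hasFDerivAt_fst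
  have hdiff : Differentiable ℝ (fderiv ℝ g) :=
    (hg.fderiv_right (m := 1) one_add_one_eq_two.le).differentiable one_ne_zero
  have hfiber : HasFDerivAt (fun p : E × E ↦ fderiv ℝ g p.1)
      (fderiv ℝ (fderiv ℝ g) p.1 ∘L .fst ℝ E E) p :=
    (hdiff p.1).hasFDerivAt.comp p hasFDerivAt_fst
  have hlift : HasFDerivAt (tangentLift g) _ p :=
    hbase.prodMk (hfiber.clm_apply hasFDerivAt_snd)
  simp [hlift.fderiv]

end TangentLift

namespace IsGlobalFlow

variable {E : Type*} [NormedAddCommGroup E] [NormedSpace ℝ E] {F : E → E} {f : ℝ → E → E}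

protected theorem tangentLift (hf : IsGlobalFlow F f) (hF : ContDiff ℝ 1 F)
    (hfd : ∀ t, Differentiable ℝ (f t)) :
    IsGlobalFlow (tangentLift F) (fun t ↦ tangentLift (f t)) where
  map_zero p := by rw [hf.map_zero_eq_id, tangentLift_id, id]
  map_add s t p := by rw [hf.map_add_eq_comp, tangentLift_comp (hfd s) (hfd t), Function.comp]
  hasDerivAt t p := by
    refine (hf.hasDerivAt t p.1).prodMk ?_
    simpa [tangentLift] using (hf.hasDerivAt_fderiv hF hfd p.1 t).clm_apply (hasDerivAt_const t p.2)

theorem hasDerivAt_fderiv_fderiv_apply (hf : IsGlobalFlow F f) (hF : ContDiff ℝ 2 F)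
    (hfC2 : ∀ t, ContDiff ℝ 2 (f t)) (x X e : E) (s : ℝ) :
    HasDerivAt (fun τ ↦ fderiv ℝ (fderiv ℝ (f τ)) x X e)
      (fderiv ℝ F (f s x) (fderiv ℝ (fderiv ℝ (f s)) x X e) +
        fderiv ℝ (fderiv ℝ F) (f s x) (fderiv ℝ (f s) x X) (fderiv ℝ (f s) x e)) s := by
  have hlift := hf.tangentLift (hF.of_le one_le_two) fun t ↦ (hfC2 t).differentiable two_ne_zero
  have hvar := (hlift.hasDerivAt_fderiv (contDiff_tangentLift hF one_add_one_eq_two.le)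
    (fun t ↦ (contDiff_tangentLift (m := 1) (hfC2 t) one_add_one_eq_two.le).differentiable
      one_ne_zero) (x, e) s).clm_apply (hasDerivAt_const s (X, (0 : E)))
  simpa [Function.comp_def, fderiv_tangentLift_apply, hF, hfC2, tangentLift] using
    (ContinuousLinearMap.snd ℝ E E).hasFDerivAt.comp_hasDerivAt s hvar

theorem fderiv_fderiv_zero (hf : IsGlobalFlow F f) : fderiv ℝ (fderiv ℝ (f 0)) = 0 := by
  have hconst : fderiv ℝ (f 0) = fun _ ↦ .id ℝ E := by
    funext x
    rw [hf.map_zero_eq_id, fderiv_id]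
  rw [hconst, fderiv_fun_const]

end IsGlobalFlow

theorem equivariant_divergence_stmt1_general
    {E : Type*} [NormedAddCommGroup E] [NormedSpace ℝ E]
    (F : E → E) (hF : ContDiff ℝ 2 F) (f : ℝ → E → E) (hf : IsGlobalFlow F f)
    (hfC2 : ∀ t : ℝ, ContDiff ℝ 2 (f t)) (x X e : E) (v : ℝ → E)
    (hv : ∀ s : ℝ, v s = fderiv ℝ (fderiv ℝ (f s)) x X e) :
    v 0 = 0 ∧
    ∀ s : ℝ,
      HasDerivAt v
        (fderiv ℝ F (f s x) (v s)
          + fderiv ℝ (fderiv ℝ F) (f s x) (fderiv ℝ (f s) x X) (fderiv ℝ (f s) x e)) s := by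
  obtain rfl : v = fun s ↦ fderiv ℝ (fderiv ℝ (f s)) x X e := funext hv
  exact ⟨by simp [hf.fderiv_fderiv_zero], hf.hasDerivAt_fderiv_fderiv_apply hF hfC2 x X e⟩

/-- Fix `x X e : E` and define `v s := D²(f s)(x)[X, e]` (second Fréchet derivative
of the time-`s` flow map).  Then `v 0 = 0` and, for all `s ≥ 0`, `v` is
differentiable with `v'(s) = DF(f s x)(v s) + D²F(f s x)[D(f s)(x) X, D(f s)(x) e]`. -/
theorem equivariant_divergence_stmt1
    {E : Type*} [NormedAddCommGroup E] [NormedSpace ℝ E] [FiniteDimensional ℝ E]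
    (F : E → E) (hF : ContDiff ℝ 2 F)
    (f : ℝ → E → E)
    (hf0 : ∀ x : E, f 0 x = x)
    (hfadd : ∀ s t : ℝ, ∀ x : E, f (s + t) x = f s (f t x))
    (hflow : ∀ t : ℝ, ∀ x : E, HasDerivAt (fun τ : ℝ => f τ x) (F (f t x)) t)
    (hfC2 : ∀ t : ℝ, ContDiff ℝ 2 (f t))
    (x X e : E)
    (v : ℝ → E)
    (hv : ∀ s : ℝ, v s = fderiv ℝ (fun y => fderiv ℝ (f s) y) x X e) :
    v 0 = 0 ∧
    ∀ s : ℝ, 0 ≤ s →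
      HasDerivAt v
        (fderiv ℝ F (f s x) (v s)
          + fderiv ℝ (fderiv ℝ F) (f s x) (fderiv ℝ (f s) x X) (fderiv ℝ (f s) x e)) s := by
  have hgeneral :=
    equivariant_divergence_stmt1_general F hF f ⟨hf0, hfadd, hflow⟩ hfC2 x X e v hv
  exact ⟨hgeneral.1, fun s _ ↦ hgeneral.2 s⟩
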